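/- There exists an absolute constant C such that for every finite irreducible reversible Markov chain (Ω,P,π), every probability measure μ on Ω, every real t ≥ 1 and every s with 2 ≤ s ≤ e^t: d_ave(t + m, μ) ≤ d_L(2t, μ) + 2/s² + √(C/s), where r := 2√(2t log s) and m := ⌈r(√s + 1)⌉. -/

import Mathlib

open Matrix Filter Asymptotics

/-- `P` is a stochastic matrix. -/
def IsStochastic {Ω : Type*} [Fintype Ω] (P : Matrix Ω Ω ℝ) : Prop :=
  (∀ x y, 0 ≤ P x y) ∧ ∀ x, ∑ y, P x y = 1

/-- `P` is irreducible. -/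
def IsIrreducibleMatrix {Ω : Type*} [Fintype Ω] [DecidableEq Ω] (P : Matrix Ω Ω ℝ) : Prop :=
  ∀ x y, ∃ n : ℕ, 0 < (P ^ n) x y

/-- `μ` is a probability vector. -/
def IsProbVec {Ω : Type*} [Fintype Ω] (μ : Ω → ℝ) : Prop :=
  (∀ x, 0 ≤ μ x) ∧ ∑ x, μ x = 1

/-- The chain `(P, pi)` is reversible. -/
def IsReversible {Ω : Type*} [Fintype Ω] (P : Matrix Ω Ω ℝ) (pi : Ω → ℝ) : Prop :=
  ∀ x y, pi x * P x y = pi y * P y x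

/-- A finite irreducible Markov chain `P` with stationary distribution `pi`. -/
def IsMC {Ω : Type*} [Fintype Ω] [DecidableEq Ω] (P : Matrix Ω Ω ℝ) (pi : Ω → ℝ) : Prop :=
  IsStochastic P ∧ IsIrreducibleMatrix P ∧ IsProbVec pi ∧ pi ᵥ* P = pi

/-- A finite irreducible reversible Markov chain `P` with stationary distribution `pi`. -/
def IsRevMC {Ω : Type*} [Fintype Ω] [DecidableEq Ω] (P : Matrix Ω Ω ℝ) (pi : Ω → ℝ) : Prop :=
  IsMC P pi ∧ IsReversible P pi

/-- Total-variation distance between two measures on a finite set. -/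
noncomputable def tvDist {Ω : Type*} [Fintype Ω] (μ ν : Ω → ℝ) : ℝ :=
  (∑ x, |μ x - ν x|) / 2

/-- The lazy version `(I + P)/2` of `P`. -/
noncomputable def lazyM {Ω : Type*} [Fintype Ω] [DecidableEq Ω] (P : Matrix Ω Ω ℝ) :
    Matrix Ω Ω ℝ :=
  (2 : ℝ)⁻¹ • (1 + P)

/-- `d_c(t, μ)`: TV distance from stationarity of the continuous-time chain at time `t`,
started from `μ`. -/
noncomputable def contDist {Ω : Type*} [Fintype Ω] [DecidableEq Ω] (P : Matrix Ω Ω ℝ) (pi : Ω → ℝ)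
    (t : ℝ) (μ : Ω → ℝ) : ℝ :=
  tvDist (fun y => ∑' k : ℕ, Real.exp (-t) * t ^ k / (Nat.factorial k) * (μ ᵥ* (P ^ k)) y) pi

/-- `d_L(t, μ)`: TV distance from stationarity of the lazy chain at (discrete) time `t`,
started from `μ`. -/
noncomputable def lazyDist {Ω : Type*} [Fintype Ω] [DecidableEq Ω] (P : Matrix Ω Ω ℝ)
    (pi : Ω → ℝ) (t : ℝ) (μ : Ω → ℝ) : ℝ :=
  tvDist (μ ᵥ* (lazyM P ^ ⌊t⌋₊)) pi

/-- `d_ave(t, μ)`: TV distance from stationarity of the averaged chain at (discrete) time `t`,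
started from `μ`. -/
noncomputable def aveDist {Ω : Type*} [Fintype Ω] [DecidableEq Ω] (P : Matrix Ω Ω ℝ) (pi : Ω → ℝ)
    (t : ℝ) (μ : Ω → ℝ) : ℝ :=
  tvDist (fun y => ((μ ᵥ* (P ^ ⌊t⌋₊)) y + (μ ᵥ* (P ^ (⌊t⌋₊ + 1))) y) / 2) pi

/-- The point mass at `x`. -/
noncomputable def deltaMass {Ω : Type*} [DecidableEq Ω] (x : Ω) : Ω → ℝ :=
  fun y => if y = x then 1 else 0

/-- Worst-case continuous-time distance `d_c(t)`. -/
noncomputable def contDistMax {Ω : Type*} [Fintype Ω] [DecidableEq Ω] (P : Matrix Ω Ω ℝ)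
    (pi : Ω → ℝ) (t : ℝ) : ℝ :=
  ⨆ x : Ω, contDist P pi t (deltaMass x)

/-- Worst-case lazy distance `d_L(t)`. -/
noncomputable def lazyDistMax {Ω : Type*} [Fintype Ω] [DecidableEq Ω] (P : Matrix Ω Ω ℝ)
    (pi : Ω → ℝ) (t : ℝ) : ℝ :=
  ⨆ x : Ω, lazyDist P pi t (deltaMass x)

/-- Worst-case averaged distance `d_ave(t)`. -/
noncomputable def aveDistMax {Ω : Type*} [Fintype Ω] [DecidableEq Ω] (P : Matrix Ω Ω ℝ)
    (pi : Ω → ℝ) (t : ℝ) : ℝ :=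
  ⨆ x : Ω, aveDist P pi t (deltaMass x)

/-- `φ_{α,C}(t) = t + ⌈C t^{(1+2α)/2} √(α log t)⌉`. -/
noncomputable def phiAC (α C t : ℝ) : ℝ :=
  t + ((⌈C * t ^ ((1 + 2 * α) / 2) * Real.sqrt (α * Real.log t)⌉ : ℤ) : ℝ)

/-- `ψ_{α,C}(x) = min (1, x + C |log(2x)|^{-α})`. -/
noncomputable def psiAC (α C x : ℝ) : ℝ :=
  min 1 (x + C * |Real.log (2 * x)| ^ (-α))

/-- `t_c(ε)`, the `ε`-mixing time of the continuous-time chain. -/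
noncomputable def contMix {Ω : Type*} [Fintype Ω] [DecidableEq Ω] (P : Matrix Ω Ω ℝ)
    (pi : Ω → ℝ) (ε : ℝ) : ℝ :=
  sInf {t : ℝ | 0 ≤ t ∧ contDistMax P pi t ≤ ε}

/-- `t_L(ε)`, the `ε`-mixing time of the lazy chain. -/
noncomputable def lazyMix {Ω : Type*} [Fintype Ω] [DecidableEq Ω] (P : Matrix Ω Ω ℝ)
    (pi : Ω → ℝ) (ε : ℝ) : ℕ :=
  sInf {t : ℕ | lazyDistMax P pi t ≤ ε}

/-- `t_ave(ε)`, the `ε`-mixing time of the averaged chain. -/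
noncomputable def aveMix {Ω : Type*} [Fintype Ω] [DecidableEq Ω] (P : Matrix Ω Ω ℝ)
    (pi : Ω → ℝ) (ε : ℝ) : ℕ :=
  sInf {t : ℕ | aveDistMax P pi t ≤ ε}

/-!
Let `f` be a test function realising the total-variation distance for the averaged chain at time
`n`. Test the lazy chain instead against the pointwise minimum of the averages
`(P ^ k + P ^ (k + 1)) f / 2` over a time window `a ≤ k ≤ b`: the law `μ P ^ k` tests this minimum
no higher than the averaged chain at time `n` tests `f`, as soon as `n - k` lies in the window. The
lazy chain at time `N` is `P` run for a `Bin(N, 1/2)` number of steps, so by Chernoff's bound this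
covers all but a fraction `2 / s ^ 2` of its mass.

The price is the drop of the `π`-mean caused by taking the minimum, at most the sum over the window
of the `L¹(π)` distances between consecutive averages. For reversible `P` the quantity
`‖P ^ k f - P ^ (k + 2) f‖²` in `L²(π)` is the second difference at `k` of the decreasing sequence
`‖P ^ k f‖²`, and it is itself decreasing in `k`; hence it is at most `2 / (k (k + 1))`, and the
drop is at most `(b - a) / a`.
-/

section

open Finset RCLike

theorem mul_secondDiff_le {a : ℕ → ℝ} (ha₀ : ∀ k, 0 ≤ a k) (ha : Antitone a)
    (hd : Antitone fun k => a k - 2 * a (k + 1) + a (k + 2)) (k : ℕ) :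
    (k : ℝ) * (k + 1) / 2 * (a k - 2 * a (k + 1) + a (k + 2)) ≤ a 0 := by
  -- Summation by parts: writing `d j` for the second differences,
  -- `a 0 = a k + k * (a k - a (k + 1)) + ∑ j < k, (j + 1) * d j`, and `d k ≤ d j` for `j ≤ k`.
  have taylor : a k + k * (a k - a (k + 1)) +
      (k : ℝ) * (k + 1) / 2 * (a k - 2 * a (k + 1) + a (k + 2)) ≤ a 0 := by
    induction k with
    | zero => simp
    | succ k ih =>
      have hstep := mul_le_mul_of_nonneg_left (hd k.le_succ)
        (show (0 : ℝ) ≤ ((k : ℝ) + 1) * (k + 2) / 2 by positivity)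
      push_cast
      linarith
  have hslope : 0 ≤ (k : ℝ) * (a k - a (k + 1)) :=
    mul_nonneg k.cast_nonneg (sub_nonneg.2 (ha k.le_succ))
  linarith [ha₀ k]

theorem sum_choose_div_two_pow (N : ℕ) :
    ∑ k ∈ range (N + 1), (N.choose k : ℝ) / 2 ^ N = 1 := by
  rw [← sum_div, div_eq_one_iff_eq (by positivity)]
  exact_mod_cast Nat.sum_range_choose N

theorem sum_choose_div_two_pow_mul_exp (N : ℕ) (θ : ℝ) :
    ∑ k ∈ range (N + 1), (N.choose k : ℝ) / 2 ^ N * Real.exp (θ * (2 * k - N)) =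
      Real.cosh θ ^ N := by
  rw [Real.cosh_eq, div_pow, add_pow, sum_div]
  refine sum_congr rfl fun k hk => ?_
  rw [← Real.exp_nat_mul, ← Real.exp_nat_mul, ← Real.exp_add,
    Nat.cast_sub (mem_range_succ_iff.1 hk),
    show (k : ℝ) * θ + (N - k) * -θ = θ * (2 * k - N) by ring]
  ring

theorem one_le_exp_neg_mul_exp_add_exp {θ x y : ℝ} (hθ : 0 ≤ θ) (hxy : x ≤ |y|) :
    1 ≤ Real.exp (-(θ * x)) * (Real.exp (θ * y) + Real.exp (-θ * y)) := by
  rw [mul_add, ← Real.exp_add, ← Real.exp_add]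
  rcases le_abs.1 hxy with h | h
  · exact (Real.one_le_exp (by linarith [mul_le_mul_of_nonneg_left h hθ])).trans
      (le_add_of_nonneg_right (Real.exp_pos _).le)
  · exact (Real.one_le_exp (by linarith [mul_le_mul_of_nonneg_left h hθ])).trans
      (le_add_of_nonneg_left (Real.exp_pos _).le)

theorem sum_choose_div_two_pow_tail_le_exp_mul (N : ℕ) {θ : ℝ} (hθ : 0 ≤ θ) (x : ℝ) :
    ∑ k ∈ range (N + 1) with x < |2 * ((k : ℕ) : ℝ) - N|, (N.choose k : ℝ) / 2 ^ N ≤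
      2 * Real.exp (N * θ ^ 2 / 2 - θ * x) := by
  have hmarkov (k : ℕ) : (if x < |2 * (k : ℝ) - N| then (N.choose k : ℝ) / 2 ^ N else 0) ≤
      (N.choose k : ℝ) / 2 ^ N * (Real.exp (-(θ * x)) *
        (Real.exp (θ * (2 * k - N)) + Real.exp (-θ * (2 * k - N)))) := by
    split_ifs with h
    · exact le_mul_of_one_le_right (by positivity) (one_le_exp_neg_mul_exp_add_exp hθ h.le)
    · positivity
  calc ∑ k ∈ range (N + 1) with x < |2 * ((k : ℕ) : ℝ) - N|, (N.choose k : ℝ) / 2 ^ N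
      ≤ ∑ k ∈ range (N + 1), (N.choose k : ℝ) / 2 ^ N * (Real.exp (-(θ * x)) *
          (Real.exp (θ * (2 * k - N)) + Real.exp (-θ * (2 * k - N)))) := by
        rw [sum_filter]
        exact sum_le_sum fun k _ => hmarkov k
    _ = 2 * (Real.exp (-(θ * x)) * Real.cosh θ ^ N) := by
        simp only [mul_left_comm _ (Real.exp (-(θ * x))), ← mul_sum, mul_add, sum_add_distrib,
          sum_choose_div_two_pow_mul_exp, Real.cosh_neg]
        ring
    _ ≤ 2 * (Real.exp (-(θ * x)) * Real.exp (θ ^ 2 / 2) ^ N) := by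
        gcongr
        exact Real.cosh_le_exp_half_sq θ
    _ = 2 * Real.exp (N * θ ^ 2 / 2 - θ * x) := by
        rw [← Real.exp_nat_mul, ← Real.exp_add]
        ring_nf

theorem sum_choose_div_two_pow_tail_le {N : ℕ} (hN : N ≠ 0) {x : ℝ} (hx : 0 ≤ x) :
    ∑ k ∈ range (N + 1) with x < |2 * ((k : ℕ) : ℝ) - N|, (N.choose k : ℝ) / 2 ^ N ≤
      2 * Real.exp (-(x ^ 2 / (2 * N))) := by
  convert sum_choose_div_two_pow_tail_le_exp_mul N (θ := x / N) (by positivity) x using 3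
  field_simp
  ring

section TotalVariation

variable {Ω : Type*} [Fintype Ω] {p q f : Ω → ℝ}

theorem dotProduct_mem_Icc (hp : p ∈ stdSimplex ℝ Ω) (hf : f ∈ Set.Icc 0 1) :
    p ⬝ᵥ f ∈ Set.Icc 0 1 := by
  refine ⟨dotProduct_nonneg_of_nonneg hp.1 hf.1, ?_⟩
  rw [← hp.2, ← dotProduct_one]
  exact dotProduct_le_dotProduct_of_nonneg_left hf.2 hp.1

theorem dotProduct_sub_dotProduct_le_tvDist (hpq : ∑ x, p x = ∑ x, q x)
    (hf : f ∈ Set.Icc 0 1) : q ⬝ᵥ f - p ⬝ᵥ f ≤ tvDist p q := by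
  have hcenter : q ⬝ᵥ f - p ⬝ᵥ f = ∑ x, (q x - p x) * (f x - 1 / 2) := by
    simp only [dotProduct, sub_mul, mul_sub, sum_sub_distrib, ← sum_mul, hpq]
    ring
  rw [hcenter, tvDist, sum_div]
  refine sum_le_sum fun x _ => ?_
  have hhalf : |f x - 1 / 2| ≤ 1 / 2 :=
    abs_le.2 ⟨by linarith [hf.1 x, Pi.zero_apply (M := fun _ : Ω => ℝ) x],
      by linarith [hf.2 x, Pi.one_apply (M := fun _ : Ω => ℝ) x]⟩
  calc (q x - p x) * (f x - 1 / 2) ≤ |q x - p x| * |f x - 1 / 2| :=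
        (le_abs_self _).trans (abs_mul _ _).le
    _ ≤ |p x - q x| * (1 / 2) := by rw [abs_sub_comm]; gcongr
    _ = |p x - q x| / 2 := by ring

theorem exists_tvDist_eq_dotProduct_sub (hpq : ∑ x, p x = ∑ x, q x) :
    ∃ f ∈ Set.Icc (0 : Ω → ℝ) 1, tvDist p q = q ⬝ᵥ f - p ⬝ᵥ f := by
  classical
  refine ⟨fun x => if p x ≤ q x then 1 else 0, ⟨fun x => ?_, fun x => ?_⟩, ?_⟩
  · simp only [Pi.zero_apply]; split_ifs <;> norm_num
  · simp only [Pi.one_apply]; split_ifs <;> norm_num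
  · have habs (x : Ω) : |p x - q x| / 2 = q x * (if p x ≤ q x then 1 else 0) -
        p x * (if p x ≤ q x then 1 else 0) - (q x - p x) / 2 := by
      split_ifs with h
      · rw [abs_of_nonpos (by linarith)]; ring
      · rw [abs_of_pos (by linarith)]; ring
    rw [tvDist, sum_div, sum_congr rfl fun x _ => habs x]
    simp only [sum_sub_distrib, ← sum_div, hpq, dotProduct, sub_self, zero_div, sub_zero]

end TotalVariation

section Stochastic

variable {Ω : Type*} [Fintype Ω] [DecidableEq Ω] {P : Matrix Ω Ω ℝ} {μ f : Ω → ℝ}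

theorem mulVec_mem_Icc (hP : P ∈ rowStochastic ℝ Ω) (hf : f ∈ Set.Icc 0 1) :
    P *ᵥ f ∈ Set.Icc 0 1 := by
  refine ⟨nonneg_mulVec_of_mem_rowStochastic hP hf.1, ?_⟩
  rw [← one_vecMul_of_mem_rowStochastic hP]
  exact fun x => dotProduct_le_dotProduct_of_nonneg_left hf.2 (hP.1 x)

theorem vecMul_mem_stdSimplex (hP : P ∈ rowStochastic ℝ Ω) (hμ : μ ∈ stdSimplex ℝ Ω) :
    μ ᵥ* P ∈ stdSimplex ℝ Ω := by
  refine ⟨nonneg_vecMul_of_mem_rowStochastic hP hμ.1, ?_⟩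
  rw [← dotProduct_one, vecMul_dotProduct_one_eq_one_rowStochastic hP]
  rw [dotProduct_one, hμ.2]

theorem lazyM_mem_rowStochastic (hP : P ∈ rowStochastic ℝ Ω) : lazyM P ∈ rowStochastic ℝ Ω := by
  rw [lazyM, smul_add]
  exact convex_rowStochastic (one_mem _) hP (by norm_num) (by norm_num) (by norm_num)

theorem lazyM_pow (P : Matrix Ω Ω ℝ) (N : ℕ) :
    lazyM P ^ N = ∑ k ∈ range (N + 1), ((N.choose k : ℝ) / 2 ^ N) • P ^ k := by
  rw [lazyM, smul_pow, add_comm, (Commute.one_right P).add_pow, smul_sum]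
  refine sum_congr rfl fun k _ => ?_
  rw [one_pow, mul_one, ← nsmul_eq_mul', ← Nat.cast_smul_eq_nsmul ℝ, smul_smul, inv_pow,
    inv_mul_eq_div]

end Stochastic

section Reversible

variable {Ω : Type*} [Fintype Ω] {P : Matrix Ω Ω ℝ} {pi : Ω → ℝ}

theorem wInner_self_eq_dotProduct_sq (pi f : Ω → ℝ) : ⟪f, f⟫_[ℝ, pi] = pi ⬝ᵥ f ^ 2 := by
  simp [wInner, dotProduct, sq]

theorem wInner_self_nonneg (hpi : 0 ≤ pi) (f : Ω → ℝ) : 0 ≤ ⟪f, f⟫_[ℝ, pi] := by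
  rw [wInner_self_eq_dotProduct_sq]
  exact dotProduct_nonneg_of_nonneg hpi fun x => sq_nonneg (f x)

theorem sq_dotProduct_abs_le_wInner_self (hpi : pi ∈ stdSimplex ℝ Ω) (f : Ω → ℝ) :
    (pi ⬝ᵥ |f|) ^ 2 ≤ ⟪f, f⟫_[ℝ, pi] := by
  have habs : |f| ^ 2 = f ^ 2 := funext fun x => sq_abs (f x)
  rw [wInner_self_eq_dotProduct_sq, ← habs]
  exact Real.pow_arith_mean_le_arith_mean_pow_of_even univ pi |f| (fun x _ => hpi.1 x) hpi.2
    even_two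

theorem IsReversible.wInner_mulVec_left (hrev : IsReversible P pi) (f g : Ω → ℝ) :
    ⟪P *ᵥ f, g⟫_[ℝ, pi] = ⟪f, P *ᵥ g⟫_[ℝ, pi] := by
  simp only [wInner, mulVec, dotProduct, smul_eq_mul, RCLike.inner_apply, conj_trivial,
    sum_mul, mul_sum]
  rw [sum_comm]
  refine sum_congr rfl fun x _ => sum_congr rfl fun y _ => ?_
  linear_combination (-(f x * g y)) * hrev x y

theorem IsReversible.wInner_sub_mulVec_mulVec_self (hrev : IsReversible P pi) (u : Ω → ℝ) :
    ⟪u - P *ᵥ P *ᵥ u, u - P *ᵥ P *ᵥ u⟫_[ℝ, pi] =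
      ⟪u, u⟫_[ℝ, pi] - 2 * ⟪P *ᵥ u, P *ᵥ u⟫_[ℝ, pi] +
        ⟪P *ᵥ P *ᵥ u, P *ᵥ P *ᵥ u⟫_[ℝ, pi] := by
  rw [wInner_sub_left, wInner_sub_right, wInner_sub_right, ← hrev.wInner_mulVec_left u,
    hrev.wInner_mulVec_left (P *ᵥ u) u]
  ring

variable [DecidableEq Ω]

theorem IsReversible.vecMul_eq (hrev : IsReversible P pi) (hP : P ∈ rowStochastic ℝ Ω) :
    pi ᵥ* P = pi := by
  ext y
  simp only [vecMul, dotProduct, hrev _ y, ← mul_sum, sum_row_of_mem_rowStochastic hP, mul_one]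

theorem wInner_mulVec_self_le (hP : P ∈ rowStochastic ℝ Ω) (hpi : 0 ≤ pi) (hst : pi ᵥ* P = pi)
    (f : Ω → ℝ) : ⟪P *ᵥ f, P *ᵥ f⟫_[ℝ, pi] ≤ ⟪f, f⟫_[ℝ, pi] := by
  have hjensen : (P *ᵥ f) ^ 2 ≤ P *ᵥ f ^ 2 := fun x =>
    Real.pow_arith_mean_le_arith_mean_pow_of_even univ (P x) f (fun y _ => hP.1 x y)
      (sum_row_of_mem_rowStochastic hP x) even_two
  calc ⟪P *ᵥ f, P *ᵥ f⟫_[ℝ, pi] = pi ⬝ᵥ (P *ᵥ f) ^ 2 := wInner_self_eq_dotProduct_sq _ _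
    _ ≤ pi ⬝ᵥ (P *ᵥ f ^ 2) := dotProduct_le_dotProduct_of_nonneg_left hjensen hpi
    _ = ⟪f, f⟫_[ℝ, pi] := by rw [dotProduct_mulVec, hst, wInner_self_eq_dotProduct_sq]

theorem IsReversible.wInner_pow_sub_pow_add_two_le (hrev : IsReversible P pi)
    (hP : P ∈ rowStochastic ℝ Ω) (hpi : 0 ≤ pi) (f : Ω → ℝ) (k : ℕ) :
    (k : ℝ) * (k + 1) / 2 *
        ⟪P ^ k *ᵥ f - P ^ (k + 2) *ᵥ f, P ^ k *ᵥ f - P ^ (k + 2) *ᵥ f⟫_[ℝ, pi] ≤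
      ⟪f, f⟫_[ℝ, pi] := by
  have hst := hrev.vecMul_eq hP
  have hsucc (k : ℕ) : P ^ (k + 1) *ᵥ f = P *ᵥ P ^ k *ᵥ f := by rw [pow_succ', mulVec_mulVec]
  set a : ℕ → ℝ := fun k => ⟪P ^ k *ᵥ f, P ^ k *ᵥ f⟫_[ℝ, pi]
  have hdiff (k : ℕ) : ⟪P ^ k *ᵥ f - P ^ (k + 2) *ᵥ f, P ^ k *ᵥ f - P ^ (k + 2) *ᵥ f⟫_[ℝ, pi] =
      a k - 2 * a (k + 1) + a (k + 2) := by
    simpa only [a, hsucc] using hrev.wInner_sub_mulVec_mulVec_self (P ^ k *ᵥ f)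
  have ha₀ (k : ℕ) : 0 ≤ a k := wInner_self_nonneg hpi _
  have ha : Antitone a := antitone_nat_of_succ_le fun k => by
    simpa only [a, hsucc] using wInner_mulVec_self_le hP hpi hst (P ^ k *ᵥ f)
  have hd : Antitone fun k => a k - 2 * a (k + 1) + a (k + 2) :=
    antitone_nat_of_succ_le fun k => by
      simpa only [← hdiff, hsucc, mulVec_sub] using
        wInner_mulVec_self_le hP hpi hst (P ^ k *ᵥ f - P ^ (k + 2) *ᵥ f)
  rw [hdiff]
  simpa [a] using mul_secondDiff_le ha₀ ha hd k

end Reversible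

section Averaged

variable {Ω : Type*} [Fintype Ω] [DecidableEq Ω] {P : Matrix Ω Ω ℝ} {pi μ f : Ω → ℝ}

/-- The averaged `k`-step transition matrix `(P ^ k + P ^ (k + 1)) / 2`, encoded as a lazy step
followed by `k` steps of `P`. -/
noncomputable def averagedM (P : Matrix Ω Ω ℝ) (k : ℕ) : Matrix Ω Ω ℝ :=
  lazyM P * P ^ k

theorem averagedM_eq (P : Matrix Ω Ω ℝ) (k : ℕ) :
    averagedM P k = (2 : ℝ)⁻¹ • (P ^ k + P ^ (k + 1)) := by
  rw [averagedM, lazyM, smul_mul_assoc, add_mul, one_mul, ← pow_succ']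

theorem aveDist_eq_tvDist (P : Matrix Ω Ω ℝ) (pi : Ω → ℝ) (t : ℝ) (μ : Ω → ℝ) :
    aveDist P pi t μ = tvDist (μ ᵥ* averagedM P ⌊t⌋₊) pi := by
  rw [aveDist, averagedM_eq, vecMul_smul, vecMul_add]
  congr 1
  ext y
  rw [Pi.smul_apply, Pi.add_apply, smul_eq_mul, div_eq_inv_mul]

theorem pow_mul_averagedM (P : Matrix Ω Ω ℝ) (k l : ℕ) :
    P ^ k * averagedM P l = averagedM P (k + l) := by
  simp only [averagedM_eq, mul_smul_comm, mul_add, ← pow_add, add_assoc]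

theorem averagedM_mem_rowStochastic (hP : P ∈ rowStochastic ℝ Ω) (k : ℕ) :
    averagedM P k ∈ rowStochastic ℝ Ω :=
  mul_mem (lazyM_mem_rowStochastic hP) (pow_mem hP k)

theorem vecMul_averagedM_of_vecMul_eq (hst : pi ᵥ* P = pi) (k : ℕ) :
    pi ᵥ* averagedM P k = pi := by
  have hpow (j : ℕ) : pi ᵥ* P ^ j = pi := by
    induction j with
    | zero => rw [pow_zero, vecMul_one]
    | succ j ih => rw [pow_succ, ← vecMul_vecMul, ih, hst]
  rw [averagedM_eq, vecMul_smul, vecMul_add, hpow, hpow, ← two_smul ℝ pi,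
    inv_smul_smul₀ two_ne_zero]

theorem averagedM_sub_averagedM_succ (P : Matrix Ω Ω ℝ) (k : ℕ) :
    averagedM P k - averagedM P (k + 1) = (2 : ℝ)⁻¹ • (P ^ k - P ^ (k + 2)) := by
  rw [averagedM_eq, averagedM_eq, ← smul_sub, add_sub_add_comm]
  congr 1
  abel

theorem IsReversible.dotProduct_abs_averagedM_sub_le (hrev : IsReversible P pi)
    (hP : P ∈ rowStochastic ℝ Ω) (hpi : pi ∈ stdSimplex ℝ Ω) (hf : f ∈ Set.Icc 0 1) {k : ℕ}
    (hk : 0 < k) :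
    pi ⬝ᵥ |averagedM P k *ᵥ f - averagedM P (k + 1) *ᵥ f| ≤ 1 / k := by
  set u := P ^ k *ᵥ f - P ^ (k + 2) *ᵥ f
  have hhalf : averagedM P k *ᵥ f - averagedM P (k + 1) *ᵥ f = (2 : ℝ)⁻¹ • u := by
    rw [← sub_mulVec, averagedM_sub_averagedM_succ, smul_mulVec, sub_mulVec]
  have hfsq : ⟪f, f⟫_[ℝ, pi] ≤ 1 := by
    rw [wInner_self_eq_dotProduct_sq]
    exact (dotProduct_mem_Icc hpi
      ⟨fun x => sq_nonneg (f x), fun x => pow_le_one₀ (hf.1 x) (hf.2 x)⟩).2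
  have hdecay : (k : ℝ) * (k + 1) / 2 * ⟪u, u⟫_[ℝ, pi] ≤ 1 :=
    (hrev.wInner_pow_sub_pow_add_two_le hP hpi.1 f k).trans hfsq
  have hu₀ : 0 ≤ ⟪u, u⟫_[ℝ, pi] := wInner_self_nonneg hpi.1 u
  have hk' : (0 : ℝ) < k := Nat.cast_pos.2 hk
  rw [hhalf]
  refine le_of_sq_le_sq ?_ (by positivity)
  calc (pi ⬝ᵥ |(2 : ℝ)⁻¹ • u|) ^ 2 ≤ ⟪(2 : ℝ)⁻¹ • u, (2 : ℝ)⁻¹ • u⟫_[ℝ, pi] :=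
        sq_dotProduct_abs_le_wInner_self hpi _
    _ = ⟪u, u⟫_[ℝ, pi] / 4 := by
        simp only [wInner_self_eq_dotProduct_sq, smul_pow, dotProduct_smul, smul_eq_mul]
        ring
    _ ≤ (1 / (k : ℝ)) ^ 2 := by
        rw [div_pow, one_pow, le_div_iff₀ (by positivity)]
        nlinarith [mul_nonneg hk'.le hu₀, mul_nonneg (sq_nonneg (k : ℝ)) hu₀]

end Averaged

section MinAverage

variable {Ω : Type*} [Fintype Ω] [DecidableEq Ω] {P : Matrix Ω Ω ℝ} {pi μ f : Ω → ℝ} {a b : ℕ}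

/-- The pointwise minimum of the averaged functions `averagedM P k *ᵥ f` over the time window
`a ≤ k ≤ b`. As a test function it is dominated by the averages at all times of the window
simultaneously. -/
noncomputable def minAverage (P : Matrix Ω Ω ℝ) (hab : a ≤ b) (f : Ω → ℝ) : Ω → ℝ :=
  (Icc a b).inf' (nonempty_Icc.2 hab) fun k => averagedM P k *ᵥ f

theorem minAverage_le (hab : a ≤ b) {k : ℕ} (hk : k ∈ Icc a b) :
    minAverage P hab f ≤ averagedM P k *ᵥ f :=
  inf'_le _ hk

theorem minAverage_mem_Icc (hP : P ∈ rowStochastic ℝ Ω) (hab : a ≤ b) (hf : f ∈ Set.Icc 0 1) :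
    minAverage P hab f ∈ Set.Icc 0 1 :=
  have hmem (k : ℕ) := mulVec_mem_Icc (averagedM_mem_rowStochastic hP k) hf
  ⟨le_inf' _ _ fun k _ => (hmem k).1,
    (minAverage_le hab (left_mem_Icc.2 hab)).trans (hmem a).2⟩

theorem averagedM_mulVec_sub_minAverage_le (hab : a ≤ b) :
    averagedM P a *ᵥ f - minAverage P hab f ≤
      ∑ j ∈ Ico a b, |averagedM P j *ᵥ f - averagedM P (j + 1) *ᵥ f| := fun x => by
  obtain ⟨k, hk, hmin⟩ := exists_mem_eq_inf' (nonempty_Icc.2 hab) fun k => (averagedM P k *ᵥ f) x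
  obtain ⟨hak, hkb⟩ := mem_Icc.1 hk
  have hmin' : minAverage P hab f x = (averagedM P k *ᵥ f) x := by
    rw [minAverage, Finset.inf'_apply, hmin]
  calc (averagedM P a *ᵥ f - minAverage P hab f) x
      ≤ dist ((averagedM P a *ᵥ f) x) ((averagedM P k *ᵥ f) x) := by
        rw [Pi.sub_apply, hmin']
        exact le_abs_self _
    _ ≤ ∑ j ∈ Ico a k, dist ((averagedM P j *ᵥ f) x) ((averagedM P (j + 1) *ᵥ f) x) :=
        dist_le_Ico_sum_dist (fun j => (averagedM P j *ᵥ f) x) hak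
    _ ≤ ∑ j ∈ Ico a b, dist ((averagedM P j *ᵥ f) x) ((averagedM P (j + 1) *ᵥ f) x) :=
        sum_le_sum_of_subset_of_nonneg (Ico_subset_Ico_right hkb) fun _ _ _ => dist_nonneg
    _ = (∑ j ∈ Ico a b, |averagedM P j *ᵥ f - averagedM P (j + 1) *ᵥ f|) x := by
        rw [Finset.sum_apply]
        rfl

theorem IsReversible.dotProduct_sub_dotProduct_minAverage_le (hrev : IsReversible P pi)
    (hP : P ∈ rowStochastic ℝ Ω) (hpi : pi ∈ stdSimplex ℝ Ω) (hf : f ∈ Set.Icc 0 1)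
    (ha : 0 < a) (hab : a ≤ b) :
    pi ⬝ᵥ f - pi ⬝ᵥ minAverage P hab f ≤ ((b : ℝ) - a) / a := by
  calc pi ⬝ᵥ f - pi ⬝ᵥ minAverage P hab f
      = pi ⬝ᵥ (averagedM P a *ᵥ f - minAverage P hab f) := by
        rw [dotProduct_sub, dotProduct_mulVec,
          vecMul_averagedM_of_vecMul_eq (hrev.vecMul_eq hP)]
    _ ≤ pi ⬝ᵥ ∑ j ∈ Ico a b, |averagedM P j *ᵥ f - averagedM P (j + 1) *ᵥ f| :=
        dotProduct_le_dotProduct_of_nonneg_left (averagedM_mulVec_sub_minAverage_le hab) hpi.1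
    _ = ∑ j ∈ Ico a b, pi ⬝ᵥ |averagedM P j *ᵥ f - averagedM P (j + 1) *ᵥ f| :=
        dotProduct_sum _ _ _
    _ ≤ ∑ _j ∈ Ico a b, 1 / (a : ℝ) := sum_le_sum fun j hj => by
        have haj : a ≤ j := (mem_Ico.1 hj).1
        refine (hrev.dotProduct_abs_averagedM_sub_le hP hpi hf (ha.trans_le haj)).trans ?_
        gcongr
    _ = ((b : ℝ) - a) / a := by
        rw [sum_const, Nat.card_Ico, nsmul_eq_mul, Nat.cast_sub hab, mul_one_div]

theorem vecMul_sum_smul_pow_dotProduct_minAverage_le (hP : P ∈ rowStochastic ℝ Ω)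
    (hμ : μ ∈ stdSimplex ℝ Ω) (hf : f ∈ Set.Icc 0 1) (hab : a ≤ b) {K : Finset ℕ} {c : ℕ → ℝ}
    (hc₀ : ∀ k ∈ K, 0 ≤ c k) (hc₁ : ∑ k ∈ K, c k = 1) (n : ℕ) :
    (μ ᵥ* ∑ k ∈ K, c k • P ^ k) ⬝ᵥ minAverage P hab f ≤
      (μ ᵥ* averagedM P n) ⬝ᵥ f + ∑ k ∈ K with ¬(a + k ≤ n ∧ n ≤ b + k), c k := by
  have hg := minAverage_mem_Icc hP hab hf
  have hμk (k : ℕ) := vecMul_mem_stdSimplex (pow_mem hP k) hμ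
  have hAf := dotProduct_mem_Icc (vecMul_mem_stdSimplex (averagedM_mem_rowStochastic hP n) hμ) hf
  have hgood (k : ℕ) (hk : a + k ≤ n ∧ n ≤ b + k) :
      (μ ᵥ* P ^ k) ⬝ᵥ minAverage P hab f ≤ (μ ᵥ* averagedM P n) ⬝ᵥ f := by
    obtain ⟨l, rfl⟩ := Nat.exists_eq_add_of_le (le_of_add_le_right hk.1)
    rw [← pow_mul_averagedM, ← vecMul_vecMul, ← dotProduct_mulVec _ (averagedM P l)]
    exact dotProduct_le_dotProduct_of_nonneg_left
      (minAverage_le hab (mem_Icc.2 ⟨by omega, by omega⟩)) (hμk k).1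
  have hterm (k : ℕ) (hk : k ∈ K) : c k * ((μ ᵥ* P ^ k) ⬝ᵥ minAverage P hab f) ≤
      c k * ((μ ᵥ* averagedM P n) ⬝ᵥ f) + if ¬(a + k ≤ n ∧ n ≤ b + k) then c k else 0 := by
    split_ifs with h
    · rw [add_zero]
      exact mul_le_mul_of_nonneg_left (hgood k h) (hc₀ k hk)
    · exact (mul_le_of_le_one_right (hc₀ k hk) (dotProduct_mem_Icc (hμk k) hg).2).trans
        (le_add_of_nonneg_left (mul_nonneg (hc₀ k hk) hAf.1))
  calc (μ ᵥ* ∑ k ∈ K, c k • P ^ k) ⬝ᵥ minAverage P hab f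
      = ∑ k ∈ K, c k * ((μ ᵥ* P ^ k) ⬝ᵥ minAverage P hab f) := by
        simp only [vecMul_sum, sum_dotProduct, vecMul_smul, smul_dotProduct, smul_eq_mul]
    _ ≤ ∑ k ∈ K, (c k * ((μ ᵥ* averagedM P n) ⬝ᵥ f) +
          if ¬(a + k ≤ n ∧ n ≤ b + k) then c k else 0) := sum_le_sum hterm
    _ = _ := by rw [sum_add_distrib, ← sum_mul, hc₁, one_mul, sum_filter]

theorem IsReversible.tvDist_averagedM_le (hrev : IsReversible P pi) (hP : P ∈ rowStochastic ℝ Ω)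
    (hpi : pi ∈ stdSimplex ℝ Ω) (hμ : μ ∈ stdSimplex ℝ Ω) {K : Finset ℕ} {c : ℕ → ℝ}
    (hc₀ : ∀ k ∈ K, 0 ≤ c k) (hc₁ : ∑ k ∈ K, c k = 1) (ha : 0 < a) (hab : a ≤ b) (n : ℕ) :
    tvDist (μ ᵥ* averagedM P n) pi ≤ tvDist (μ ᵥ* ∑ k ∈ K, c k • P ^ k) pi +
      ∑ k ∈ K with ¬(a + k ≤ n ∧ n ≤ b + k), c k + ((b : ℝ) - a) / a := by
  have hA := vecMul_mem_stdSimplex (averagedM_mem_rowStochastic hP n) hμ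
  have hQ : ∑ k ∈ K, c k • P ^ k ∈ rowStochastic ℝ Ω :=
    convex_rowStochastic.sum_mem hc₀ hc₁ fun k _ => pow_mem hP k
  have hμQ := vecMul_mem_stdSimplex hQ hμ
  obtain ⟨f, hf, htv⟩ := exists_tvDist_eq_dotProduct_sub (hA.2.trans hpi.2.symm)
  have hdual := dotProduct_sub_dotProduct_le_tvDist (hμQ.2.trans hpi.2.symm)
    (minAverage_mem_Icc hP hab hf)
  have hmin := hrev.dotProduct_sub_dotProduct_minAverage_le hP hpi hf ha hab
  have hmix := vecMul_sum_smul_pow_dotProduct_minAverage_le hP hμ hf hab hc₀ hc₁ n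
  linarith

end MinAverage

theorem IsReversible.tvDist_averagedM_le_tvDist_lazyM {Ω : Type*} [Fintype Ω] [DecidableEq Ω]
    {P : Matrix Ω Ω ℝ} {pi μ : Ω → ℝ} (hrev : IsReversible P pi) (hP : P ∈ rowStochastic ℝ Ω)
    (hpi : pi ∈ stdSimplex ℝ Ω) (hμ : μ ∈ stdSimplex ℝ Ω) {N M : ℕ} (hN : N ≠ 0) {r : ℝ}
    (hr : 0 ≤ r) (hM : r / 2 + 1 < M) :
    tvDist (μ ᵥ* averagedM P (N / 2 + M)) pi ≤ tvDist (μ ᵥ* lazyM P ^ N) pi +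
      2 * Real.exp (-(r ^ 2 / (2 * N))) + (r + 1) / (M - r / 2 - 1) := by
  set R := ⌊r⌋₊ / 2
  have hR : (R : ℝ) ≤ r / 2 :=
    Nat.cast_div_le.trans (by rw [Nat.cast_ofNat]; gcongr; exact Nat.floor_le hr)
  have hRM : R + 1 < M := by
    have hcast : (R : ℝ) + 1 < M := by linarith
    exact_mod_cast hcast
  -- The extra `1` at the lower end absorbs the rounding when `N` and `⌊r⌋₊` are both odd.
  have hwindow (k : ℕ) (hk : ¬(M - R - 1 + k ≤ N / 2 + M ∧ N / 2 + M ≤ M + R + k)) :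
      r < |2 * (k : ℝ) - N| := by
    contrapose! hk
    have hfloor : (2 * (k : ℤ) - N).natAbs ≤ ⌊r⌋₊ := by
      refine Nat.le_floor ?_
      rw [Nat.cast_natAbs]
      exact_mod_cast hk
    omega
  have hbad : ∑ k ∈ range (N + 1) with ¬(M - R - 1 + k ≤ N / 2 + M ∧ N / 2 + M ≤ M + R + k),
      (N.choose k : ℝ) / 2 ^ N ≤ 2 * Real.exp (-(r ^ 2 / (2 * N))) :=
    (sum_le_sum_of_subset_of_nonneg (monotone_filter_right _ fun k _ => hwindow k)
      fun _ _ _ => by positivity).trans (sum_choose_div_two_pow_tail_le hN hr)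
  have hmain := hrev.tvDist_averagedM_le hP hpi hμ
    (fun k _ => (by positivity : (0 : ℝ) ≤ (N.choose k : ℝ) / 2 ^ N))
    (sum_choose_div_two_pow N) (a := M - R - 1) (b := M + R) (by omega) (by omega) (N / 2 + M)
  rw [← lazyM_pow] at hmain
  have hwidth : (((M + R : ℕ) : ℝ) - (M - R - 1 : ℕ)) / (M - R - 1 : ℕ) ≤
      (r + 1) / (M - r / 2 - 1) := by
    rw [Nat.cast_sub (by omega), Nat.cast_sub (by omega)]
    push_cast
    exact div_le_div₀ (by linarith) (by linarith) (by linarith) (by linarith)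
  linarith

theorem add_one_div_le_sqrt {r s x : ℝ} (hr : 2 ≤ r) (hs : 0 < s)
    (hx : r * (Real.sqrt s + 1) ≤ x) : (r + 1) / (x - r / 2 - 1) ≤ Real.sqrt (4 / s) := by
  have hrs : 0 < r * Real.sqrt s := by positivity
  rw [show (4 : ℝ) = 2 ^ 2 by norm_num, Real.sqrt_div (by norm_num), Real.sqrt_sq (by norm_num)]
  calc (r + 1) / (x - r / 2 - 1) ≤ (2 * r) / (r * Real.sqrt s) :=
        div_le_div₀ (by linarith) (by linarith) hrs (by linarith)
    _ = 2 / Real.sqrt s := by field_simp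

theorem two_mul_exp_neg_sq_div_le {t s : ℝ} (ht : 1 ≤ t) (hs : 1 ≤ s) :
    2 * Real.exp (-((2 * Real.sqrt (2 * t * Real.log s)) ^ 2 / (2 * ⌊2 * t⌋₊))) ≤ 2 / s ^ 2 := by
  have hlog : 0 ≤ Real.log s := Real.log_nonneg hs
  have hN : 0 < ⌊2 * t⌋₊ := Nat.floor_pos.2 (by linarith)
  have hNt : (⌊2 * t⌋₊ : ℝ) ≤ 2 * t := Nat.floor_le (by linarith)
  have hexp : Real.log (s ^ 2) ≤ (2 * Real.sqrt (2 * t * Real.log s)) ^ 2 / (2 * ⌊2 * t⌋₊) := by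
    rw [Real.log_pow, mul_pow, Real.sq_sqrt (by positivity), le_div_iff₀ (by positivity)]
    push_cast
    linarith [mul_le_mul_of_nonneg_left hNt hlog]
  rw [Real.exp_neg, ← div_eq_mul_inv]
  gcongr
  exact (Real.log_le_iff_le_exp (by positivity)).1 hexp

theorem ave_dist_le_lazy_dist_coupling_general {Ω : Type*} [Fintype Ω] [DecidableEq Ω]
    {P : Matrix Ω Ω ℝ} {pi μ : Ω → ℝ} (hP : IsStochastic P) (hpi : IsProbVec pi)
    (hrev : IsReversible P pi) (hμ : IsProbVec μ) {t s : ℝ} (ht : 1 ≤ t) (hs : 2 ≤ s) :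
    aveDist P pi
        (t + ((⌈2 * Real.sqrt (2 * t * Real.log s) * (Real.sqrt s + 1)⌉ : ℤ) : ℝ)) μ ≤
      lazyDist P pi (2 * t) μ + 2 / s ^ 2 + Real.sqrt (4 / s) := by
  have htail := two_mul_exp_neg_sq_div_le ht (by linarith : 1 ≤ s)
  have hr : 2 ≤ 2 * Real.sqrt (2 * t * Real.log s) := by
    have hlog : 1 / 2 ≤ Real.log s := by
      linarith [Real.log_two_gt_d9, Real.log_le_log two_pos hs]
    have hone : 1 ≤ Real.sqrt (2 * t * Real.log s) := Real.one_le_sqrt.2 (by nlinarith)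
    linarith
  set r := 2 * Real.sqrt (2 * t * Real.log s)
  set M := ⌈r * (Real.sqrt s + 1)⌉₊
  have hM : r * (Real.sqrt s + 1) ≤ M := Nat.le_ceil _
  have hrM : r / 2 + 1 < M := by
    nlinarith [Real.one_le_sqrt.2 (by linarith : 1 ≤ s)]
  have htime : ⌊t + M⌋₊ = ⌊2 * t⌋₊ / 2 + M := by
    rw [Nat.floor_add_natCast (by linarith), ← Nat.floor_div_ofNat,
      mul_div_cancel_left₀ t two_ne_zero]
  have hN : ⌊2 * t⌋₊ ≠ 0 := (Nat.floor_pos.2 (by linarith)).ne'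
  have hmain := hrev.tvDist_averagedM_le_tvDist_lazyM (mem_rowStochastic_iff_sum.2 hP) hpi hμ hN
    (by linarith : 0 ≤ r) hrM
  have hsqrt := add_one_div_le_sqrt hr (by linarith : 0 < s) hM
  rw [← natCast_ceil_eq_intCast_ceil (by positivity), aveDist_eq_tvDist, htime, lazyDist]
  linarith

end

/-- **Proposition 3.2 (eq. (19)) of Hermon–Peres.**
There is an absolute constant `C` such that for every finite irreducible reversible Markov
chain, every initial distribution `μ`, every `t ≥ 1` and every `2 ≤ s ≤ e^t`,
`d_ave(t + m, μ) ≤ d_L(2t, μ) + 2/s² + √(C/s)`, where `r = 2√(2t log s)` and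
`m = ⌈r(√s + 1)⌉`. -/
theorem ave_dist_le_lazy_dist_coupling :
    ∃ C : ℝ, 0 < C ∧
      ∀ (Ω : Type) [Fintype Ω] [DecidableEq Ω]
        (P : Matrix Ω Ω ℝ) (pi : Ω → ℝ), IsRevMC P pi →
        ∀ μ : Ω → ℝ, IsProbVec μ →
        ∀ t s : ℝ, 1 ≤ t → 2 ≤ s → s ≤ Real.exp t →
          aveDist P pi
              (t + ((⌈2 * Real.sqrt (2 * t * Real.log s) * (Real.sqrt s + 1)⌉ : ℤ) : ℝ)) μ ≤
            lazyDist P pi (2 * t) μ + 2 / s ^ 2 + Real.sqrt (C / s) := by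
  refine ⟨4, by norm_num, fun Ω _ _ P pi h μ hμ t s ht hs _ => ?_⟩
  exact ave_dist_le_lazy_dist_coupling_general h.1.1 h.1.2.2.1 h.2 hμ ht hs
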